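/- arXiv:1703.04422 — 3 statements merged into one kernel-verified Lean document; each statement's English description precedes it below -/
import Mathlib

section
/- Let H be a complex Hilbert space, d ≥ 2, X ⊆ ℕ^d a monotone set, and A = (A_1,…,A_d) a commuting row contraction on H such that A^n = 0 for every n ∈ ℕ^d∖X. Then for every complex polynomial Q in d variables, ‖Q(A)‖ ≤ ‖Q(B^X)‖. -/
open scoped BigOperators ComplexConjugate

noncomputable section

namespace DruryArveson

/-- Multi-indices. -/
abbrev Idx (d : ℕ) := Fin d → ℕ

/-- The weight `β(n) = |n|!/n!`. -/
def beta (d : ℕ) (n : Idx d) : ℝ :=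
  ((∑ j, n j).factorial : ℝ) / ∏ j, ((n j).factorial : ℝ)

/-- standard basis multi-index `e_j`. -/
def e (d : ℕ) (j : Fin d) : Idx d := fun i => if i = j then 1 else 0

/-- A set `X ⊆ ℕ^d` is monotone if its complement is shift invariant. -/
def MonotoneSet (d : ℕ) (X : Set (Idx d)) : Prop :=
  ∀ n, n ∉ X → ∀ j, n + e d j ∉ X

/-- membership in the Drury–Arveson space (coefficientwise). -/
def MemHd (d : ℕ) (a : Idx d → ℂ) : Prop :=
  Summable fun n => ‖a n‖ ^ 2 / beta d n

/-- the Drury–Arveson norm. -/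
def hdNorm (d : ℕ) (a : Idx d → ℂ) : ℝ :=
  Real.sqrt (∑' n, ‖a n‖ ^ 2 / beta d n)

/-- the Drury–Arveson inner product. -/
def hdInner (d : ℕ) (a b : Idx d → ℂ) : ℂ :=
  ∑' n, a n * conj (b n) / (beta d n : ℂ)

/-- membership in `H_d(X)`. -/
def MemHdX (d : ℕ) (X : Set (Idx d)) (a : Idx d → ℂ) : Prop :=
  (∀ n ∉ X, a n = 0) ∧ MemHd d a

/-- membership in `ℓ²(X, β)`. -/
def MemL2 (d : ℕ) (X : Set (Idx d)) (g : Idx d → ℂ) : Prop :=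
  (∀ n ∉ X, g n = 0) ∧ Summable fun n => ‖g n‖ ^ 2 * beta d n

/-- the norm of `ℓ²(ℕ^d, β)`. -/
def l2Norm (d : ℕ) (g : Idx d → ℂ) : ℝ :=
  Real.sqrt (∑' n, ‖g n‖ ^ 2 * beta d n)

/-- the inner product of `ℓ²(ℕ^d, β)`. -/
def l2Inner (d : ℕ) (g h : Idx d → ℂ) : ℂ :=
  ∑' n, g n * conj (h n) * (beta d n : ℂ)

/-- the compressed backshift `B_j^X = P_X B_j|_{ℓ²(X,β)}`. -/
def BXop (d : ℕ) (X : Set (Idx d)) (j : Fin d) (g : Idx d → ℂ) : Idx d → ℂ :=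
  X.indicator fun n => g (n + e d j)

/-- ordered power `(T_1)^{k_1} ∘ ⋯ ∘ (T_d)^{k_d}` of a `d`-tuple of maps. -/
def opPow (d : ℕ) {α : Type*} (T : Fin d → (α → α)) (k : Idx d) : α → α :=
  (List.ofFn fun j => (T j)^[k j]).foldr (· ∘ ·) id

/-- multiplication by `z_j` on coefficients. -/
def Mop (d : ℕ) (j : Fin d) (a : Idx d → ℂ) : Idx d → ℂ :=
  fun n => if 0 < n j then a (n - e d j) else 0

/-- the compressed multiplication `M_j^X = P_X M_j|_{H_d(X)}`. -/
def MopX (d : ℕ) (X : Set (Idx d)) (j : Fin d) (a : Idx d → ℂ) : Idx d → ℂ :=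
  X.indicator (Mop d j a)

/-- the Taylor coefficients of a polynomial of `d` variables. -/
def Qhat (d : ℕ) (Q : MvPolynomial (Fin d) ℂ) (n : Idx d) : ℂ :=
  Q.coeff (Finsupp.equivFunOnFinite.symm n)

/-- `Q(T)` for a `d`-tuple of maps on the coefficient space. -/
def polyOp (d : ℕ) (Q : MvPolynomial (Fin d) ℂ)
    (T : Fin d → ((Idx d → ℂ) → (Idx d → ℂ))) (a : Idx d → ℂ) : Idx d → ℂ :=
  fun n => ∑ k ∈ Q.support, Q.coeff k * opPow d T (⇑k) a n

/-- operator norm of a map with respect to the `ℓ²(X,β)` norm. -/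
def opNormL2 (d : ℕ) (X : Set (Idx d)) (T : (Idx d → ℂ) → (Idx d → ℂ)) : ℝ :=
  sInf {C | 0 ≤ C ∧ ∀ g, MemL2 d X g → l2Norm d (T g) ≤ C * l2Norm d g}

/-- operator norm of a map with respect to the `H_d(X)` norm. -/
def opNormHdX (d : ℕ) (X : Set (Idx d)) (T : (Idx d → ℂ) → (Idx d → ℂ)) : ℝ :=
  sInf {C | 0 ≤ C ∧ ∀ a, MemHdX d X a → hdNorm d (T a) ≤ C * hdNorm d a}

/-- coefficients of the product `φ · f` of two power series. -/
def mconv (d : ℕ) (φ a : Idx d → ℂ) (m : Idx d) : ℂ :=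
  ∑ k ∈ Finset.Iic m, φ k * a (m - k)

/-- `φ` is a multiplier of `H_d`. -/
def IsMultiplier (d : ℕ) (φ : Idx d → ℂ) : Prop :=
  ∀ a, MemHd d a → MemHd d (mconv d φ a)

/-- the multiplier norm `‖φ‖_{M(H_d)}`. -/
def multNorm (d : ℕ) (φ : Idx d → ℂ) : ℝ :=
  sInf {C | 0 ≤ C ∧ ∀ a, MemHd d a → hdNorm d (mconv d φ a) ≤ C * hdNorm d a}

/-- `A^n = A_1^{n_1} ⋯ A_d^{n_d}` for a tuple of bounded operators. -/
def ApowCLM (d : ℕ) {H : Type*} [NormedAddCommGroup H] [NormedSpace ℂ H]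
    (A : Fin d → H →L[ℂ] H) (n : Idx d) : H →L[ℂ] H :=
  (List.ofFn fun j => A j ^ n j).prod

/-- `Q(A) = ∑ c_k A^k` for a tuple of bounded operators. -/
def QevalCLM (d : ℕ) {H : Type*} [NormedAddCommGroup H] [NormedSpace ℂ H]
    (A : Fin d → H →L[ℂ] H) (Q : MvPolynomial (Fin d) ℂ) : H →L[ℂ] H :=
  ∑ k ∈ Q.support, Q.coeff k • ApowCLM d A ⇑k

/-- monomial `z^n`. -/
def mpow (d : ℕ) (z : Fin d → ℂ) (n : Idx d) : ℂ := ∏ j, z j ^ n j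

/-!
A row contraction `A` has a defect map `D` with `‖D h‖² = ‖h‖² - ∑ j, ‖A_j h‖²`. If the row norm
of `A` is less than `1`, then telescoping over the levels `|n| = N` shows that `V h(n) = D A^n h`
is an isometry of `H` into `ℓ²(ℕ^d, β; K)`. It intertwines `A_j` with the backshift `B_j`, and
`A^n = 0` off `X` forces its values to be supported in `X`, so `Q(A)` is a restriction of
`Q(B^X) ⊗ 1`, whose norm is that of `Q(B^X)`. A general row contraction is the limit of `r A` as
`r → 1⁻`.
-/

open Finset ENNReal

/-! ### Multi-indices and weights -/

section MultiIndex

variable {d : ℕ}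

theorem sum_nsmul_e (k : Idx d) : ∑ j, k j • e d j = k := by
  ext i
  simp [e]

theorem sum_add_e (n : Idx d) (j : Fin d) : ∑ i, (n + e d j) i = ∑ i, n i + 1 := by
  simp [e, sum_add_distrib]

theorem exists_add_e_eq {n : Idx d} {j : Fin d} (hj : n j ≠ 0) : ∃ m, m + e d j = n := by
  refine ⟨n - e d j, tsub_add_cancel_of_le fun i ↦ ?_⟩
  by_cases hi : i = j
  · subst hi
    simpa [e] using Nat.one_le_iff_ne_zero.mpr hj
  · simp [e, hi]

theorem idx_induction {p : Idx d → Prop} (zero : p 0) (add_e : ∀ n j, p n → p (n + e d j))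
    (n : Idx d) : p n := by
  induction hN : ∑ i, n i generalizing n with
  | zero =>
    obtain rfl : n = 0 := funext fun i ↦ sum_eq_zero_iff.mp hN i (mem_univ i)
    exact zero
  | succ N ih =>
    obtain ⟨j, -, hj⟩ := exists_ne_zero_of_sum_ne_zero (hN.trans_ne N.succ_ne_zero)
    obtain ⟨m, rfl⟩ := exists_add_e_eq hj
    rw [sum_add_e] at hN
    exact add_e m j (ih m (Nat.succ_injective hN))

theorem MonotoneSet.add_notMem {X : Set (Idx d)} (hX : MonotoneSet d X) {n : Idx d} (hn : n ∉ X)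
    (k : Idx d) : n + k ∉ X := by
  induction k using idx_induction with
  | zero => simpa using hn
  | add_e k j ih => simpa only [add_assoc] using hX _ ih j

theorem beta_pos (n : Idx d) : 0 < beta d n := by
  unfold beta
  positivity

theorem beta_zero : beta d 0 = 1 := by
  simp [beta]

theorem prod_factorial_add_e (n : Idx d) (j : Fin d) :
    ∏ i, ((n + e d j) i).factorial = (n j + 1) * ∏ i, (n i).factorial := by
  rw [Fintype.prod_eq_mul_prod_compl j, Fintype.prod_eq_mul_prod_compl j, ← mul_assoc]
  congr 1
  · simp [e, Nat.factorial_succ]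
  · refine prod_congr rfl fun i hi ↦ ?_
    have hij : i ≠ j := by simpa using hi
    simp [e, hij]

theorem succ_mul_beta_add_e (n : Idx d) (j : Fin d) :
    (n j + 1 : ℝ) * beta d (n + e d j) = ((∑ i, n i : ℕ) + 1 : ℝ) * beta d n := by
  have hprod := congrArg (Nat.cast (R := ℝ)) (prod_factorial_add_e n j)
  push_cast at hprod
  rw [beta, beta, hprod, sum_add_e, Nat.factorial_succ, Nat.cast_mul, Nat.cast_succ]
  field_simp

theorem beta_le_beta_add_e (n : Idx d) (j : Fin d) : beta d n ≤ beta d (n + e d j) := by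
  have hj : (n j : ℝ) ≤ (∑ i, n i : ℕ) := by
    exact_mod_cast single_le_sum (fun i _ ↦ (n i).zero_le) (mem_univ j)
  refine le_of_mul_le_mul_left ?_ (n j).cast_add_one_pos
  rw [succ_mul_beta_add_e]
  exact mul_le_mul_of_nonneg_right (add_le_add_left hj 1) (beta_pos n).le

theorem beta_le_beta_add (n k : Idx d) : beta d n ≤ beta d (n + k) := by
  induction k using idx_induction with
  | zero => simp
  | add_e k j ih => simpa only [add_assoc] using ih.trans (beta_le_beta_add_e _ j)

end MultiIndex

/-! ### Summation over levels -/

theorem hasSum_of_hasSum_fiberwise {α ι : Type*} {f : α → ℝ} (hf : ∀ x, 0 ≤ f x) {p : α → ι}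
    {S : ι → Finset α} (hS : ∀ i x, x ∈ S i ↔ p x = i) {a : ℝ}
    (h : HasSum (fun i ↦ ∑ x ∈ S i, f x) a) : HasSum f a := by
  have hfiber (i : ι) : HasSum (fun x : {x // p x = i} ↦ f x) (∑ x ∈ S i, f x) :=
    (Equiv.subtypeEquivRight (hS i)).hasSum_iff.mp ((S i).hasSum f)
  rw [← (Equiv.sigmaFiberEquiv p).hasSum_iff]
  refine HasSum.sigma_of_hasSum h hfiber ((summable_sigma_of_nonneg fun x ↦ hf _).mpr
    ⟨fun i ↦ (hfiber i).summable, ?_⟩)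
  exact h.summable.congr fun i ↦ (hfiber i).tsum_eq.symm

section LevelSum

variable {d : ℕ}

/-- The `β`-weighted sum of `f` over the level `{n | |n| = N}`. -/
def levelSum (f : Idx d → ℝ) (N : ℕ) : ℝ :=
  ∑ n ∈ piAntidiag univ N, beta d n * f n

theorem mem_level {N : ℕ} {n : Idx d} : n ∈ piAntidiag univ N ↔ ∑ i, n i = N := by
  simp

theorem levelSum_zero (f : Idx d → ℝ) : levelSum f 0 = f 0 := by
  simp [levelSum, beta_zero]

theorem levelSum_mono {f g : Idx d → ℝ} (hfg : ∀ n, f n ≤ g n) (N : ℕ) :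
    levelSum f N ≤ levelSum g N :=
  sum_le_sum fun n _ ↦ mul_le_mul_of_nonneg_left (hfg n) (beta_pos n).le

theorem levelSum_nonneg {f : Idx d → ℝ} (hf : ∀ n, 0 ≤ f n) (N : ℕ) : 0 ≤ levelSum f N :=
  sum_nonneg fun n _ ↦ mul_nonneg (beta_pos n).le (hf n)

theorem levelSum_sub (f g : Idx d → ℝ) (N : ℕ) :
    levelSum (fun n ↦ f n - g n) N = levelSum f N - levelSum g N := by
  simp only [levelSum, mul_sub, sum_sub_distrib]

theorem levelSum_const_mul (s : ℝ) (f : Idx d → ℝ) (N : ℕ) :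
    levelSum (fun n ↦ s * f n) N = s * levelSum f N := by
  simp only [levelSum, mul_sum, mul_left_comm]

theorem levelSum_comp_add_e (f : Idx d → ℝ) (j : Fin d) (N : ℕ) :
    levelSum (fun n ↦ f (n + e d j)) N =
      ∑ m ∈ piAntidiag univ (N + 1), (m j / (N + 1 : ℝ)) * (beta d m * f m) := by
  refine sum_of_injOn (· + e d j) (add_left_injective _).injOn ?_ ?_ ?_
  · intro n hn
    rw [mem_coe, mem_level] at hn ⊢
    rw [sum_add_e, hn]
  · intro m hm hm'
    by_contra hne
    obtain ⟨n, rfl⟩ := exists_add_e_eq (j := j) (n := m) (by rintro h; simp [h] at hne)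
    rw [mem_level, sum_add_e, Nat.add_right_cancel_iff] at hm
    exact hm' ⟨n, mem_level.mpr hm, rfl⟩
  · intro n hn
    have hβ := succ_mul_beta_add_e n j
    rw [mem_level.mp hn] at hβ
    have hj : ((n + e d j) j : ℝ) = n j + 1 := by simp [e]
    rw [hj, ← mul_assoc, div_mul_eq_mul_div, hβ]
    field_simp

theorem levelSum_succ (f : Idx d → ℝ) (N : ℕ) :
    levelSum f (N + 1) = levelSum (fun n ↦ ∑ j, f (n + e d j)) N := by
  calc levelSum f (N + 1)
      = ∑ m ∈ piAntidiag univ (N + 1), ∑ j, (m j / (N + 1 : ℝ)) * (beta d m * f m) := by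
        refine sum_congr rfl fun m hm ↦ ?_
        have hm' : ∑ j, (m j : ℝ) = N + 1 := by exact_mod_cast mem_level.mp hm
        rw [← sum_mul, ← sum_div, hm', div_self N.cast_add_one_ne_zero, one_mul]
    _ = ∑ j, levelSum (fun n ↦ f (n + e d j)) N := by
        rw [sum_comm]
        simp only [levelSum_comp_add_e]
    _ = levelSum (fun n ↦ ∑ j, f (n + e d j)) N := by
        simp only [levelSum, mul_sum]
        rw [sum_comm]

theorem hasSum_of_hasSum_levelSum {f : Idx d → ℝ} (hf : ∀ n, 0 ≤ f n) {a : ℝ}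
    (h : HasSum (levelSum f) a) : HasSum (fun n ↦ beta d n * f n) a :=
  hasSum_of_hasSum_fiberwise (fun n ↦ mul_nonneg (beta_pos n).le (hf n))
    (fun _ _ ↦ mem_level) h

/-- By `levelSum_succ` the level sums of the left-hand side telescope. -/
theorem hasSum_beta_mul_sub {f : Idx d → ℝ} (hf : ∀ n, 0 ≤ f n) {s : ℝ} (hs0 : 0 ≤ s)
    (hs1 : s < 1) (hfs : ∀ n, ∑ j, f (n + e d j) ≤ s * f n) :
    HasSum (fun n ↦ beta d n * (f n - ∑ j, f (n + e d j))) (f 0) := by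
  have hnonneg (n : Idx d) : 0 ≤ f n - ∑ j, f (n + e d j) :=
    sub_nonneg.mpr ((hfs n).trans (mul_le_of_le_one_left (hf n) hs1.le))
  have hgeom (N : ℕ) : levelSum f N ≤ s ^ N * f 0 := by
    induction N with
    | zero => simp [levelSum_zero]
    | succ N ih =>
      calc levelSum f (N + 1) ≤ s * levelSum f N := by
            rw [levelSum_succ, ← levelSum_const_mul]
            exact levelSum_mono hfs N
        _ ≤ s * (s ^ N * f 0) := mul_le_mul_of_nonneg_left ih hs0
        _ = s ^ (N + 1) * f 0 := by rw [pow_succ', mul_assoc]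
  have htendsto : Filter.Tendsto (levelSum f) Filter.atTop (nhds 0) :=
    squeeze_zero (levelSum_nonneg hf) hgeom
      (by simpa using (tendsto_pow_atTop_nhds_zero_of_lt_one hs0 hs1).mul_const (f 0))
  refine hasSum_of_hasSum_levelSum hnonneg ?_
  rw [hasSum_iff_tendsto_nat_of_nonneg (levelSum_nonneg hnonneg)]
  simp only [levelSum_sub, ← levelSum_succ, sum_range_sub', levelSum_zero]
  simpa using htendsto.const_sub (f 0)

end LevelSum

/-! ### Powers of operators -/

section Powers

variable {d : ℕ}

theorem ApowCLM_eq_prod_map {H : Type*} [NormedAddCommGroup H] [NormedSpace ℂ H]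
    (A : Fin d → H →L[ℂ] H) (n : Idx d) :
    ApowCLM d A n = ((List.finRange d).map fun j ↦ A j ^ n j).prod := by
  rw [ApowCLM, List.ofFn_eq_map]

theorem list_prod_map_pow_add {M ι : Type*} [Monoid M] {x : ι → M}
    (hx : ∀ i j, Commute (x i) (x j)) (n m : ι → ℕ) (l : List ι) :
    (l.map fun i ↦ x i ^ (n i + m i)).prod =
      (l.map fun i ↦ x i ^ n i).prod * (l.map fun i ↦ x i ^ m i).prod := by
  induction l with
  | nil => simp
  | cons i l ih =>
    have hcomm : Commute (x i ^ m i) (l.map fun j ↦ x j ^ n j).prod :=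
      Commute.list_prod_right _ _ <| List.forall_mem_map.mpr fun j _ ↦ (hx i j).pow_pow _ _
    rw [List.map_cons, List.prod_cons, ih, pow_add, mul_assoc, hcomm.left_comm, ← mul_assoc]
    rfl

variable {H : Type*} [NormedAddCommGroup H] [NormedSpace ℂ H]

theorem ApowCLM_zero (A : Fin d → H →L[ℂ] H) : ApowCLM d A 0 = 1 := by
  simp [ApowCLM]

theorem ApowCLM_add {A : Fin d → H →L[ℂ] H} (hA : ∀ i j, Commute (A i) (A j)) (n m : Idx d) :
    ApowCLM d A (n + m) = ApowCLM d A n * ApowCLM d A m := by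
  simp only [ApowCLM_eq_prod_map, Pi.add_apply, list_prod_map_pow_add hA]

theorem ApowCLM_e (A : Fin d → H →L[ℂ] H) (j : Fin d) : ApowCLM d A (e d j) = A j := by
  rw [ApowCLM_eq_prod_map, List.prod_map_eq_pow_single j]
  · simp [e, List.count_eq_one_of_mem (List.nodup_finRange d) (List.mem_finRange j)]
  · intro i hij _
    simp [e, hij]

theorem ApowCLM_add_e {A : Fin d → H →L[ℂ] H} (hA : ∀ i j, Commute (A i) (A j)) (n : Idx d)
    (j : Fin d) : ApowCLM d A (n + e d j) = A j * ApowCLM d A n := by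
  rw [add_comm, ApowCLM_add hA, ApowCLM_e]

theorem ApowCLM_smul (r : ℂ) (A : Fin d → H →L[ℂ] H) (n : Idx d) :
    ApowCLM d (r • A) n = r ^ (∑ j, n j) • ApowCLM d A n := by
  have hlist (l : List (Fin d)) : (l.map fun j ↦ (r • A) j ^ n j).prod =
      r ^ (l.map n).sum • (l.map fun j ↦ A j ^ n j).prod := by
    induction l with
    | nil => simp
    | cons j l ih =>
      rw [List.map_cons, List.prod_cons, ih, Pi.smul_apply, smul_pow, smul_mul_smul_comm,
        ← pow_add, List.map_cons, List.sum_cons, List.map_cons, List.prod_cons]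
  rw [ApowCLM_eq_prod_map, ApowCLM_eq_prod_map, hlist, ← List.ofFn_eq_map, List.sum_ofFn]

end Powers

/-! ### Polynomials in the backshift -/

section Backshift

variable {d : ℕ}

/-- The action `Q(B)` of a polynomial in the backshifts `B_j x(n) = x(n + e_j)`, on functions with
values in an arbitrary space `E`. -/
def polyShift {E : Type*} [AddCommMonoid E] [Module ℂ E] (Q : MvPolynomial (Fin d) ℂ)
    (x : Idx d → E) (n : Idx d) : E :=
  ∑ k ∈ Q.support, Q.coeff k • x (n + k)

theorem polyShift_apply_linear {E F : Type*} [AddCommMonoid E] [Module ℂ E] [AddCommMonoid F]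
    [Module ℂ F] (L : E →ₗ[ℂ] F) (Q : MvPolynomial (Fin d) ℂ) (x : Idx d → E) :
    (polyShift Q fun n ↦ L (x n)) = fun n ↦ L (polyShift Q x n) := by
  ext n
  simp [polyShift]

variable {X : Set (Idx d)}

theorem BXop_eq_comp_add (hX : MonotoneSet d X) {g : Idx d → ℂ} (hg : ∀ n ∉ X, g n = 0)
    (j : Fin d) : BXop d X j g = fun n ↦ g (n + e d j) :=
  Set.indicator_eq_self.mpr fun n hn ↦ by_contra fun hnX ↦ hn (hg _ (hX n hnX j))

theorem iterate_BXop (hX : MonotoneSet d X) {g : Idx d → ℂ} (hg : ∀ n ∉ X, g n = 0)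
    (j : Fin d) (t : ℕ) : (BXop d X j)^[t] g = fun n ↦ g (n + t • e d j) := by
  induction t with
  | zero => simp
  | succ t ih =>
    rw [Function.iterate_succ_apply', ih,
      BXop_eq_comp_add hX fun n hn ↦ hg _ (hX.add_notMem hn _)]
    simp only [succ_nsmul', add_assoc]

theorem opPow_BXop (hX : MonotoneSet d X) {g : Idx d → ℂ} (hg : ∀ n ∉ X, g n = 0) (k : Idx d) :
    opPow d (BXop d X) k g = fun n ↦ g (n + k) := by
  have hlist (l : List (Fin d)) : (l.map fun j ↦ (BXop d X j)^[k j]).foldr (· ∘ ·) id g =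
      fun n ↦ g (n + (l.map fun j ↦ k j • e d j).sum) := by
    induction l with
    | nil => simp
    | cons j l ih =>
      simp only [List.map_cons, List.foldr_cons, List.sum_cons, Function.comp_apply, ih]
      rw [iterate_BXop hX fun n hn ↦ hg _ (hX.add_notMem hn _)]
      simp only [add_assoc]
  rw [opPow, List.ofFn_eq_map, hlist, ← List.ofFn_eq_map, List.sum_ofFn, sum_nsmul_e]

theorem polyOp_BXop (hX : MonotoneSet d X) {g : Idx d → ℂ} (hg : ∀ n ∉ X, g n = 0)
    (Q : MvPolynomial (Fin d) ℂ) : polyOp d Q (BXop d X) g = polyShift Q g := by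
  ext n
  simp only [polyOp, polyShift, opPow_BXop hX hg, smul_eq_mul]

end Backshift

/-! ### The space `ℓ²(ℕ^d, β; E)` -/

section WeightedL2

variable {d : ℕ}

/-- The squared norm of `ℓ²(ℕ^d, β; E)`, with the value `∞` off the space. -/
def l2ENormSq {E : Type*} [NormedAddCommGroup E] (x : Idx d → E) : ℝ≥0∞ :=
  ∑' n, ENNReal.ofReal (‖x n‖ ^ 2 * beta d n)

section Normed

variable {E : Type*} [NormedAddCommGroup E]

theorem norm_sq_mul_beta_nonneg (x : Idx d → E) (n : Idx d) : 0 ≤ ‖x n‖ ^ 2 * beta d n :=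
  mul_nonneg (sq_nonneg _) (beta_pos n).le

theorem l2ENormSq_eq_ofReal {x : Idx d → E} {a : ℝ}
    (hx : HasSum (fun n ↦ ‖x n‖ ^ 2 * beta d n) a) : l2ENormSq x = ENNReal.ofReal a := by
  rw [l2ENormSq, ← ENNReal.ofReal_tsum_of_nonneg (norm_sq_mul_beta_nonneg x) hx.summable,
    hx.tsum_eq]

theorem summable_iff_l2ENormSq_ne_top {x : Idx d → E} :
    Summable (fun n ↦ ‖x n‖ ^ 2 * beta d n) ↔ l2ENormSq x ≠ ∞ := by
  refine ⟨fun hx ↦ l2ENormSq_eq_ofReal hx.hasSum ▸ ENNReal.ofReal_ne_top, fun hx ↦ ?_⟩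
  exact (ENNReal.summable_toReal hx).congr fun n ↦
    ENNReal.toReal_ofReal (norm_sq_mul_beta_nonneg x n)

theorem ofReal_l2Norm_sq {g : Idx d → ℂ} (hg : l2ENormSq g ≠ ∞) :
    ENNReal.ofReal (l2Norm d g ^ 2) = l2ENormSq g := by
  rw [l2Norm, Real.sq_sqrt (tsum_nonneg (norm_sq_mul_beta_nonneg g)),
    l2ENormSq_eq_ofReal (summable_iff_l2ENormSq_ne_top.mpr hg).hasSum]

theorem l2ENormSq_comp_add_le (x : Idx d → E) (k : Idx d) :
    (l2ENormSq fun n ↦ x (n + k)) ≤ l2ENormSq x :=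
  calc (l2ENormSq fun n ↦ x (n + k))
      ≤ ∑' n, ENNReal.ofReal (‖x (n + k)‖ ^ 2 * beta d (n + k)) :=
        ENNReal.tsum_le_tsum fun n ↦ ENNReal.ofReal_le_ofReal <|
          mul_le_mul_of_nonneg_left (beta_le_beta_add n k) (sq_nonneg _)
    _ ≤ l2ENormSq x :=
        ENNReal.tsum_comp_le_tsum_of_injective (add_left_injective k)
          fun n ↦ ENNReal.ofReal (‖x n‖ ^ 2 * beta d n)

theorem norm_sum_smul_sq_le {𝕜 ι : Type*} [NormedField 𝕜] [NormedSpace 𝕜 E] (S : Finset ι)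
    (c : ι → 𝕜) (x : ι → E) :
    ‖∑ k ∈ S, c k • x k‖ ^ 2 ≤ (∑ k ∈ S, ‖c k‖ ^ 2) * ∑ k ∈ S, ‖x k‖ ^ 2 :=
  calc ‖∑ k ∈ S, c k • x k‖ ^ 2 ≤ (∑ k ∈ S, ‖c k‖ * ‖x k‖) ^ 2 := by
        gcongr
        exact norm_sum_le_of_le S fun k _ ↦ norm_smul_le (c k) (x k)
    _ ≤ _ := sum_mul_sq_le_sq_mul_sq S _ _

theorem exists_l2ENormSq_polyShift_le [NormedSpace ℂ E] (Q : MvPolynomial (Fin d) ℂ) :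
    ∃ M : ℝ, 0 ≤ M ∧ ∀ x : Idx d → E,
      l2ENormSq (polyShift Q x) ≤ ENNReal.ofReal (M ^ 2) * l2ENormSq x := by
  set S := ∑ k ∈ Q.support, ‖Q.coeff k‖ ^ 2
  have hS : 0 ≤ S := sum_nonneg fun _ _ ↦ sq_nonneg _
  refine ⟨√(S * #Q.support), Real.sqrt_nonneg _, fun x ↦ ?_⟩
  rw [Real.sq_sqrt (by positivity)]
  calc l2ENormSq (polyShift Q x)
      ≤ ∑' n, ENNReal.ofReal S *
          ∑ k ∈ Q.support, ENNReal.ofReal (‖x (n + k)‖ ^ 2 * beta d n) := by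
        refine ENNReal.tsum_le_tsum fun n ↦ ?_
        rw [← ENNReal.ofReal_sum_of_nonneg
          fun k _ ↦ mul_nonneg (sq_nonneg _) (beta_pos n).le, ← ENNReal.ofReal_mul hS,
          ← sum_mul, ← mul_assoc]
        exact ENNReal.ofReal_le_ofReal <|
          mul_le_mul_of_nonneg_right (norm_sum_smul_sq_le _ _ _) (beta_pos n).le
    _ = ENNReal.ofReal S * ∑ k ∈ Q.support, l2ENormSq fun n ↦ x (n + ⇑k) := by
        rw [ENNReal.tsum_mul_left, Summable.tsum_finsetSum fun _ _ ↦ ENNReal.summable]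
        rfl
    _ ≤ ENNReal.ofReal S * (#Q.support * l2ENormSq x) := by
        gcongr
        rw [← nsmul_eq_mul]
        exact sum_le_card_nsmul _ _ _ fun k _ ↦ l2ENormSq_comp_add_le x k
    _ = ENNReal.ofReal (S * #Q.support) * l2ENormSq x := by
        rw [ENNReal.ofReal_mul hS, ENNReal.ofReal_natCast, mul_assoc]

end Normed

section Hilbert

variable {𝕜 K : Type*} [RCLike 𝕜] [NormedAddCommGroup K]

theorem hasSum_norm_inner_sq [InnerProductSpace 𝕜 K] {ι : Type*} (b : HilbertBasis ι 𝕜 K) (x : K) :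
    HasSum (fun i ↦ ‖inner 𝕜 (b i) x‖ ^ 2) (‖x‖ ^ 2) := by
  have h := RCLike.hasSum_re 𝕜 (b.hasSum_inner_mul_inner x x)
  simpa only [inner_mul_symm_re_eq_norm, norm_mul, norm_inner_symm x, ← sq,
    inner_self_eq_norm_sq] using h

theorem l2ENormSq_eq_tsum_inner [InnerProductSpace 𝕜 K] {ι : Type*} (b : HilbertBasis ι 𝕜 K)
    (x : Idx d → K) :
    l2ENormSq x = ∑' i, l2ENormSq fun n ↦ inner 𝕜 (b i) (x n) := by
  simp only [l2ENormSq]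
  rw [ENNReal.tsum_comm]
  refine tsum_congr fun n ↦ ?_
  have h := (hasSum_norm_inner_sq b (x n)).mul_right (beta d n)
  rw [← ENNReal.ofReal_tsum_of_nonneg
    (fun i ↦ norm_sq_mul_beta_nonneg (fun n ↦ inner 𝕜 (b i) (x n)) n) h.summable, h.tsum_eq]

/-- The coordinates in an orthonormal basis of `K` split `Q(B^X) ⊗ 1` into copies of `Q(B^X)`. -/
theorem l2ENormSq_polyShift_le [InnerProductSpace ℂ K] [CompleteSpace K] {X : Set (Idx d)}
    (hX : MonotoneSet d X) {Q : MvPolynomial (Fin d) ℂ} {C : ℝ}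
    (hC : ∀ g, MemL2 d X g → l2Norm d (polyOp d Q (BXop d X) g) ≤ C * l2Norm d g)
    {x : Idx d → K} (hxX : ∀ n ∉ X, x n = 0) (hx : l2ENormSq x ≠ ∞) :
    l2ENormSq (polyShift Q x) ≤ ENNReal.ofReal (C ^ 2) * l2ENormSq x := by
  obtain ⟨ι, b, -⟩ := exists_hilbertBasis ℂ K
  let g (i : ι) (n : Idx d) : ℂ := inner ℂ (b i) (x n)
  have hgX (i : ι) : ∀ n ∉ X, g i n = 0 := fun n hn ↦ by simp [g, hxX n hn]
  have hcoord (i : ι) : (fun n ↦ inner ℂ (b i) (polyShift Q x n)) = polyShift Q (g i) :=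
    (polyShift_apply_linear (innerSL ℂ (b i)).toLinearMap Q x).symm
  rw [l2ENormSq_eq_tsum_inner b, l2ENormSq_eq_tsum_inner b x, ← ENNReal.tsum_mul_left]
  refine ENNReal.tsum_le_tsum fun i ↦ ?_
  have hg : l2ENormSq (g i) ≠ ∞ :=
    ne_top_of_le_ne_top hx ((ENNReal.le_tsum i).trans_eq (l2ENormSq_eq_tsum_inner b x).symm)
  have hQg : l2ENormSq (polyShift Q (g i)) ≠ ∞ := by
    obtain ⟨M, -, hM⟩ := exists_l2ENormSq_polyShift_le (E := ℂ) Q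
    exact ne_top_of_le_ne_top (ENNReal.mul_ne_top ENNReal.ofReal_ne_top hg) (hM (g i))
  rw [hcoord, ← ofReal_l2Norm_sq hQg, ← ofReal_l2Norm_sq hg, ← polyOp_BXop hX (hgX i),
    ← ENNReal.ofReal_mul (sq_nonneg C), ← mul_pow]
  gcongr
  · exact Real.sqrt_nonneg _
  · exact hC (g i) ⟨hgX i, summable_iff_l2ENormSq_ne_top.mpr hg⟩

end Hilbert

theorem exists_l2Norm_polyOp_BXop_le {X : Set (Idx d)} (hX : MonotoneSet d X)
    (Q : MvPolynomial (Fin d) ℂ) :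
    ∃ C, 0 ≤ C ∧ ∀ g, MemL2 d X g → l2Norm d (polyOp d Q (BXop d X) g) ≤ C * l2Norm d g := by
  obtain ⟨M, hM0, hM⟩ := exists_l2ENormSq_polyShift_le (d := d) (E := ℂ) Q
  refine ⟨M, hM0, fun g ⟨hgX, hg⟩ ↦ ?_⟩
  have hg' : l2ENormSq g ≠ ∞ := summable_iff_l2ENormSq_ne_top.mp hg
  have hQg : l2ENormSq (polyShift Q g) ≠ ∞ :=
    ne_top_of_le_ne_top (ENNReal.mul_ne_top ENNReal.ofReal_ne_top hg') (hM g)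
  have hle := hM g
  rw [← ofReal_l2Norm_sq hQg, ← ofReal_l2Norm_sq hg', ← ENNReal.ofReal_mul (sq_nonneg M),
    ← mul_pow, ENNReal.ofReal_le_ofReal_iff (sq_nonneg _)] at hle
  rw [polyOp_BXop hX hgX]
  exact le_of_sq_le_sq hle (mul_nonneg hM0 (Real.sqrt_nonneg _))

end WeightedL2

/-! ### The isometry attached to a strict row contraction -/

section Dilation

open InnerProductSpace.Core in
theorem exists_linearMap_norm_sq_eq.{u, v} {𝕜 : Type u} {F : Type v} [RCLike 𝕜] [AddCommGroup F]
    [Module 𝕜 F] (c : PreInnerProductSpace.Core 𝕜 F) :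
    ∃ (K : Type v) (_ : NormedAddCommGroup K) (_ : InnerProductSpace 𝕜 K) (_ : CompleteSpace K)
      (D : F →ₗ[𝕜] K), ∀ x, ‖D x‖ ^ 2 = RCLike.re (c.inner x x) := by
  let _ : SeminormedAddCommGroup F := toSeminormedAddCommGroup (c := c)
  let _ : InnerProductSpace 𝕜 F := InnerProductSpace.ofCore c
  refine ⟨UniformSpace.Completion F, inferInstance, inferInstance, inferInstance,
    (UniformSpace.Completion.toComplₗᵢ (𝕜 := 𝕜) (E := F)).toLinearMap, fun x ↦ ?_⟩
  calc _ = ‖x‖ ^ 2 := by simp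
    _ = _ := InnerProductSpace.norm_sq_eq_re_inner x

section Defect

variable {𝕜 ι H E : Type*} [RCLike 𝕜] [Fintype ι] [NormedAddCommGroup H] [InnerProductSpace 𝕜 H]
  [NormedAddCommGroup E] [InnerProductSpace 𝕜 E]

theorem re_inner_sub_sum_inner (A : ι → H →ₗ[𝕜] E) (h : H) :
    RCLike.re (inner 𝕜 h h - ∑ j, inner 𝕜 (A j h) (A j h)) = ‖h‖ ^ 2 - ∑ j, ‖A j h‖ ^ 2 := by
  rw [map_sub, map_sum, inner_self_eq_norm_sq]
  simp only [inner_self_eq_norm_sq]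

/-- The form `⟪x, y⟫ - ∑ j, ⟪A_j x, A_j y⟫` of a row contraction. -/
@[reducible]
def defectForm (A : ι → H →ₗ[𝕜] E) (hA : ∀ h, ∑ j, ‖A j h‖ ^ 2 ≤ ‖h‖ ^ 2) :
    PreInnerProductSpace.Core 𝕜 H where
  inner x y := inner 𝕜 x y - ∑ j, inner 𝕜 (A j x) (A j y)
  conj_inner_symm x y := by simp
  re_inner_nonneg x := by
    rw [re_inner_sub_sum_inner]
    exact sub_nonneg.mpr (hA x)
  add_left x y z := by
    simp only [map_add, inner_add_left, sum_add_distrib]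
    ring
  smul_left x y r := by
    simp only [map_smul, inner_smul_left, mul_sub, mul_sum]

theorem exists_defect_map.{u} {H : Type u} [NormedAddCommGroup H] [InnerProductSpace 𝕜 H]
    (A : ι → H →ₗ[𝕜] E) (hA : ∀ h, ∑ j, ‖A j h‖ ^ 2 ≤ ‖h‖ ^ 2) :
    ∃ (K : Type u) (_ : NormedAddCommGroup K) (_ : InnerProductSpace 𝕜 K) (_ : CompleteSpace K)
      (D : H →ₗ[𝕜] K), ∀ h, ‖D h‖ ^ 2 = ‖h‖ ^ 2 - ∑ j, ‖A j h‖ ^ 2 := by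
  obtain ⟨K, _, _, _, D, hD⟩ := exists_linearMap_norm_sq_eq (defectForm A hA)
  exact ⟨K, _, _, ‹_›, D, fun h ↦ (hD h).trans (re_inner_sub_sum_inner A h)⟩

end Defect

variable {d : ℕ} {H K : Type*} [NormedAddCommGroup H] [InnerProductSpace ℂ H]
  [NormedAddCommGroup K] [InnerProductSpace ℂ K]

/-- The dilation `V h(n) = D A^n h`; for the defect map `D` of a strict row contraction `A` it is
an isometry of `H` into `ℓ²(ℕ^d, β; K)`. -/
def dilation (A : Fin d → H →L[ℂ] H) (D : H →ₗ[ℂ] K) (h : H) (n : Idx d) : K :=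
  D (ApowCLM d A n h)

theorem polyShift_dilation {A : Fin d → H →L[ℂ] H} (hA : ∀ i j, Commute (A i) (A j))
    (D : H →ₗ[ℂ] K) (Q : MvPolynomial (Fin d) ℂ) (h : H) :
    polyShift Q (dilation A D h) = dilation A D (QevalCLM d A Q h) := by
  ext n
  simp only [polyShift, dilation, QevalCLM, ApowCLM_add hA, _root_.sum_apply,
    _root_.smul_apply, mul_apply_eq_comp, map_sum, map_smul]

theorem l2ENormSq_dilation {A : Fin d → H →L[ℂ] H} (hA : ∀ i j, Commute (A i) (A j)) {s : ℝ}
    (hs0 : 0 ≤ s) (hs1 : s < 1) (hrow : ∀ h, ∑ j, ‖A j h‖ ^ 2 ≤ s * ‖h‖ ^ 2) {D : H →ₗ[ℂ] K}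
    (hD : ∀ h, ‖D h‖ ^ 2 = ‖h‖ ^ 2 - ∑ j, ‖A j h‖ ^ 2) (h : H) :
    l2ENormSq (dilation A D h) = ENNReal.ofReal (‖h‖ ^ 2) := by
  let f : Idx d → ℝ := fun n ↦ ‖ApowCLM d A n h‖ ^ 2
  have hf (n : Idx d) : ∑ j, f (n + e d j) = ∑ j, ‖A j (ApowCLM d A n h)‖ ^ 2 := by
    simp only [f, ApowCLM_add_e hA, mul_apply_eq_comp]
  have hsum := hasSum_beta_mul_sub (f := f) (fun n ↦ sq_nonneg _) hs0 hs1
    fun n ↦ (hf n).trans_le (hrow _)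
  refine l2ENormSq_eq_ofReal ?_
  simpa [dilation, hD, hf, f, ApowCLM_zero, mul_comm] using hsum

theorem norm_QevalCLM_apply_le_of_strict {X : Set (Idx d)} (hX : MonotoneSet d X)
    {A : Fin d → H →L[ℂ] H} (hA : ∀ i j, Commute (A i) (A j)) {s : ℝ} (hs0 : 0 ≤ s) (hs1 : s < 1)
    (hrow : ∀ h, ∑ j, ‖A j h‖ ^ 2 ≤ s * ‖h‖ ^ 2) (hA0 : ∀ n ∉ X, ApowCLM d A n = 0)
    {Q : MvPolynomial (Fin d) ℂ} {C : ℝ} (hC0 : 0 ≤ C)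
    (hC : ∀ g, MemL2 d X g → l2Norm d (polyOp d Q (BXop d X) g) ≤ C * l2Norm d g) (h : H) :
    ‖QevalCLM d A Q h‖ ≤ C * ‖h‖ := by
  obtain ⟨K, _, _, _, D, hD⟩ := exists_defect_map (fun j ↦ (A j).toLinearMap) fun h ↦
    (hrow h).trans (mul_le_of_le_one_left (sq_nonneg _) hs1.le)
  have hiso := l2ENormSq_dilation hA hs0 hs1 hrow hD
  have hVX : ∀ n ∉ X, dilation A D h n = 0 := fun n hn ↦ by simp [dilation, hA0 n hn]
  have hle := l2ENormSq_polyShift_le hX hC hVX (hiso h ▸ ENNReal.ofReal_ne_top)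
  rw [polyShift_dilation hA, hiso, hiso, ← ENNReal.ofReal_mul (sq_nonneg C), ← mul_pow,
    ENNReal.ofReal_le_ofReal_iff (sq_nonneg _)] at hle
  exact le_of_sq_le_sq hle (mul_nonneg hC0 (norm_nonneg h))

end Dilation

section RowContraction

variable {d : ℕ} {H : Type*} [NormedAddCommGroup H]

theorem continuous_QevalCLM_smul [NormedSpace ℂ H] (A : Fin d → H →L[ℂ] H)
    (Q : MvPolynomial (Fin d) ℂ) (h : H) :
    Continuous fun r : ℝ ↦ QevalCLM d ((r : ℂ) • A) Q h := by
  simp only [QevalCLM, ApowCLM_smul, _root_.sum_apply, _root_.smul_apply]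
  fun_prop

theorem norm_QevalCLM_apply_le [InnerProductSpace ℂ H] {X : Set (Idx d)} (hX : MonotoneSet d X)
    {A : Fin d → H →L[ℂ] H} (hA : ∀ i j, Commute (A i) (A j))
    (hrow : ∀ h, ∑ j, ‖A j h‖ ^ 2 ≤ ‖h‖ ^ 2) (hA0 : ∀ n ∉ X, ApowCLM d A n = 0)
    {Q : MvPolynomial (Fin d) ℂ} {C : ℝ} (hC0 : 0 ≤ C)
    (hC : ∀ g, MemL2 d X g → l2Norm d (polyOp d Q (BXop d X) g) ≤ C * l2Norm d g) (h : H) :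
    ‖QevalCLM d A Q h‖ ≤ C * ‖h‖ := by
  have hstrict (r : ℝ) (hr0 : 0 ≤ r) (hr1 : r < 1) :
      ‖QevalCLM d ((r : ℂ) • A) Q h‖ ≤ C * ‖h‖ := by
    have hrA (i j : Fin d) : Commute (((r : ℂ) • A) i) (((r : ℂ) • A) j) :=
      ((hA i j).smul_left (r : ℂ)).smul_right (r : ℂ)
    have hrrow (x : H) : ∑ j, ‖((r : ℂ) • A) j x‖ ^ 2 ≤ r ^ 2 * ‖x‖ ^ 2 := by
      calc ∑ j, ‖((r : ℂ) • A) j x‖ ^ 2 = r ^ 2 * ∑ j, ‖A j x‖ ^ 2 := by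
            simp [norm_smul, mul_pow, mul_sum]
        _ ≤ r ^ 2 * ‖x‖ ^ 2 := mul_le_mul_of_nonneg_left (hrow x) (sq_nonneg r)
    have hrA0 : ∀ n ∉ X, ApowCLM d ((r : ℂ) • A) n = 0 := fun n hn ↦ by
      rw [ApowCLM_smul, hA0 n hn, smul_zero]
    exact norm_QevalCLM_apply_le_of_strict hX hrA (sq_nonneg r)
      (pow_lt_one₀ hr0 hr1 two_ne_zero) hrrow hrA0 hC0 hC h
  have hlim : Filter.Tendsto (fun r : ℝ ↦ ‖QevalCLM d ((r : ℂ) • A) Q h‖) (nhdsWithin 1 (Set.Iio 1))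
      (nhds ‖QevalCLM d A Q h‖) := by
    simpa using (continuous_QevalCLM_smul A Q h).norm.continuousWithinAt.tendsto
      (x := (1 : ℝ)) (s := Set.Iio 1)
  refine le_of_tendsto hlim ?_
  filter_upwards [Ioo_mem_nhdsLT one_pos] with r hr using hstrict r hr.1.le hr.2

end RowContraction

theorem drury_inequality_vanishing_general (d : ℕ) {H : Type*} [NormedAddCommGroup H]
    [InnerProductSpace ℂ H] (X : Set (Idx d)) (hX : MonotoneSet d X)
    (A : Fin d → H →L[ℂ] H)
    (hcomm : ∀ i j, A i ∘L A j = A j ∘L A i)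
    (hrow : ∀ h : H, ∑ j, ‖A j h‖ ^ 2 ≤ ‖h‖ ^ 2)
    (hA0 : ∀ n ∉ X, ApowCLM d A n = 0)
    (Q : MvPolynomial (Fin d) ℂ) :
    ‖QevalCLM d A Q‖ ≤ opNormL2 d X (polyOp d Q (BXop d X)) := by
  refine le_csInf (exists_l2Norm_polyOp_BXop_le hX Q) ?_
  rintro C ⟨hC0, hC⟩
  exact ContinuousLinearMap.opNorm_le_bound _ hC0 fun h ↦
    norm_QevalCLM_apply_le hX hcomm hrow hA0 hC0 hC h

/-- Let `X ⊆ ℕ^d` be monotone, `d ≥ 2`, and `A` a commuting row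
contraction on a complex Hilbert space `H` with `A^n = 0` for every `n ∉ X`.  Then for
every complex polynomial `Q` of `d` variables, `‖Q(A)‖ ≤ ‖Q(B^X)‖`. -/
theorem drury_inequality_vanishing (d : ℕ) (hd : 2 ≤ d) {H : Type*} [NormedAddCommGroup H]
    [InnerProductSpace ℂ H] [CompleteSpace H] (X : Set (Idx d)) (hX : MonotoneSet d X)
    (A : Fin d → H →L[ℂ] H)
    (hcomm : ∀ i j, A i ∘L A j = A j ∘L A i)
    (hrow : ∀ h : H, ∑ j, ‖A j h‖ ^ 2 ≤ ‖h‖ ^ 2)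
    (hA0 : ∀ n ∉ X, ApowCLM d A n = 0)
    (Q : MvPolynomial (Fin d) ℂ) :
    ‖QevalCLM d A Q‖ ≤ opNormL2 d X (polyOp d Q (BXop d X)) :=
  drury_inequality_vanishing_general d X hX A hcomm hrow hA0 Q

end DruryArveson
end
end

section
/- Let A = (A_1,…,A_d) be a commuting d-tuple of bounded operators on a Hilbert space H satisfying the strict row contraction condition ∑_{j=1}^d ‖A_j h‖² ≤ r² ‖h‖² for all h ∈ H, for some 0 < r < 1. Let D = (I − ∑_{j=1}^d A_j^* A_j)^{1/2} be the defect operator. Then for every h ∈ H, ∑_{n∈ℕ^d} β(n) ‖D A^n h‖² = ‖h‖². -/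
open scoped BigOperators ComplexConjugate

noncomputable section

namespace DruryArveson

/-! Since `D† D = 1 - ∑ j, A_j† A_j`, the defect satisfies `‖D x‖² = ‖x‖² - ∑ j, ‖A_j x‖²`, so
`‖D ·‖² = N - T N` where `N = ‖·‖²` and `T q = ∑ j, q ∘ A_j` acts on real functions on `H`.
Composition with the commuting `A_j` gives commuting operators, so the multinomial theorem reads
`T ^ k q = ∑_{|n| = k} β(n) q (A ^ n ·)`. Hence the terms of degree `k` of the series add up to
`T ^ k N h - T ^ (k + 1) N h`, and the series telescopes. Under the strict row contraction
condition `T N ≤ r² N`, so that `T ^ k N ≤ r ^ (2 * k) N` tends to `0`.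
-/

open Filter Finset MulOpposite Topology

theorem hasSum_of_hasSum_sum_fiber {α ι : Type*} {f : α → ℝ} {c : ℝ} (hf : ∀ a, 0 ≤ f a)
    (g : α → ι) (s : ι → Finset α) (hs : ∀ i a, a ∈ s i ↔ g a = i)
    (hc : HasSum (fun i => ∑ a ∈ s i, f a) c) : HasSum f c := by
  have hfiber : ∀ i, HasSum (fun a : {a // g a = i} => f a) (∑ a ∈ s i, f a) := fun i => by
    rw [← (Equiv.subtypeEquivRight (hs i)).hasSum_iff]
    exact (s i).hasSum f
  rw [← (Equiv.sigmaFiberEquiv g).hasSum_iff]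
  refine HasSum.sigma_of_hasSum hc hfiber
    ((summable_sigma_of_nonneg fun x => hf _).2 ⟨fun i => (hfiber i).summable, ?_⟩)
  exact hc.summable.congr fun i => (hfiber i).tsum_eq.symm

theorem beta_eq_multinomial (d : ℕ) (n : Idx d) : beta d n = Nat.multinomial univ n := by
  rw [beta, Nat.multinomial, Nat.cast_div (Nat.prod_factorial_dvd_factorial_sum _ _)
    (by positivity), Nat.cast_prod]

theorem beta_nonneg (d : ℕ) (n : Idx d) : 0 ≤ beta d n := by
  rw [beta_eq_multinomial]
  exact Nat.cast_nonneg _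

theorem op_prod_ofFn_of_commute {M : Type*} [Monoid M] {d : ℕ} {a : Fin d → M}
    (ha : ∀ i j, Commute (a i) (a j)) :
    op (List.ofFn a).prod = (List.ofFn fun j => op (a j)).prod := by
  have hpairwise : (List.ofFn fun j => op (a j)).reverse.Pairwise Commute :=
    List.pairwise_reverse.2 (List.pairwise_ofFn.2 fun i j _ => (ha j i).op)
  rw [op_list_prod, List.map_ofFn]
  exact (List.reverse_perm _).prod_eq' hpairwise

theorem norm_sq_apply_of_adjoint_comp_self_eq {𝕜 ι E F G : Type*} [RCLike 𝕜] [Fintype ι]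
    [NormedAddCommGroup E] [InnerProductSpace 𝕜 E] [CompleteSpace E]
    [NormedAddCommGroup F] [InnerProductSpace 𝕜 F] [CompleteSpace F]
    [NormedAddCommGroup G] [InnerProductSpace 𝕜 G] [CompleteSpace G]
    {A : ι → E →L[𝕜] F} {D : E →L[𝕜] G}
    (hD : D.adjoint ∘L D = 1 - ∑ j, (A j).adjoint ∘L A j) (x : E) :
    ‖D x‖ ^ 2 = ‖x‖ ^ 2 - ∑ j, ‖A j x‖ ^ 2 := by
  simp only [ContinuousLinearMap.apply_norm_sq_eq_inner_adjoint_left, hD, sub_apply,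
    _root_.sum_apply, one_apply_eq_self, inner_sub_left, sum_inner, map_sub, map_sum,
    inner_self_eq_norm_sq]

section RowMap

variable {d : ℕ} {H : Type*} [NormedAddCommGroup H] [NormedSpace ℂ H]

/-- Precomposition `B ↦ (q ↦ q ∘ B)` of real functions on `H` with operators on `H`. The opposite
monoid accounts for the reversal `q ∘ (B * C) = (q ∘ B) ∘ C` of the order of factors. -/
def precomp (H : Type*) [NormedAddCommGroup H] [NormedSpace ℂ H] :
    (H →L[ℂ] H)ᵐᵒᵖ →* Module.End ℝ (H → ℝ) where
  toFun B := LinearMap.funLeft ℝ ℝ B.unop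
  map_one' := rfl
  map_mul' _ _ := rfl

theorem precomp_apply (B : H →L[ℂ] H) (q : H → ℝ) (h : H) : precomp H (op B) q h = q (B h) :=
  rfl

/-- The operator `q ↦ ∑ j, q ∘ A j` on real functions. It is the counterpart of the completely
positive map `X ↦ ∑ j, (A j)† X (A j)` on operators, which it induces on quadratic forms
`q h = ⟪X h, h⟫`; working with functions avoids adjoints. -/
def rowMap (A : Fin d → H →L[ℂ] H) : Module.End ℝ (H → ℝ) :=
  ∑ j, precomp H (op (A j))

theorem rowMap_apply (A : Fin d → H →L[ℂ] H) (q : H → ℝ) (h : H) :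
    rowMap A q h = ∑ j, q (A j h) := by
  simp only [rowMap, LinearMap.sum_apply, Finset.sum_apply, precomp_apply]

theorem rowMap_monotone (A : Fin d → H →L[ℂ] H) : Monotone (rowMap A) := fun p q hpq h => by
  simp only [rowMap_apply]
  exact sum_le_sum fun j _ => hpq _

theorem rowMap_pow_apply {A : Fin d → H →L[ℂ] H} (hA : ∀ i j, Commute (A i) (A j)) (k : ℕ)
    (q : H → ℝ) (h : H) :
    (rowMap A ^ k) q h = ∑ n ∈ piAntidiag univ k, beta d n * q (ApowCLM d A n h) := by
  have hcomm : ((univ : Finset (Fin d)) : Set (Fin d)).Pairwise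
      (Function.onFun Commute fun j => precomp H (op (A j))) :=
    fun i _ j _ _ => (hA i j).op.map (precomp H)
  have hmonomial (n : Idx d) : univ.noncommProd (fun j => precomp H (op (A j)) ^ n j)
      (hcomm.mono' fun _ _ h => h.pow_pow ..) = precomp H (op (ApowCLM d A n)) := by
    rw [ApowCLM, op_prod_ofFn_of_commute fun i j => (hA i j).pow_pow _ _, map_list_prod,
      List.map_ofFn]
    simp [noncommProd, Fin.univ_def, List.ofFn_eq_map, Function.comp_def]
  rw [rowMap, sum_pow_eq_sum_piAntidiag_of_commute univ _ hcomm, LinearMap.sum_apply,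
    Finset.sum_apply]
  refine sum_congr rfl fun n _ => ?_
  rw [hmonomial, ← nsmul_eq_mul, LinearMap.smul_apply, Pi.smul_apply, nsmul_eq_mul,
    beta_eq_multinomial, precomp_apply]

theorem rowMap_pow_le {A : Fin d → H →L[ℂ] H} {q : H → ℝ} {c : ℝ} (hc : 0 ≤ c)
    (hq : rowMap A q ≤ c • q) (k : ℕ) : (rowMap A ^ k) q ≤ c ^ k • q := by
  induction k with
  | zero => simp
  | succ k ih =>
    calc (rowMap A ^ (k + 1)) q = rowMap A ((rowMap A ^ k) q) := by
          rw [pow_succ', Module.End.mul_apply]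
      _ ≤ rowMap A (c ^ k • q) := rowMap_monotone A ih
      _ = c ^ k • rowMap A q := map_smul _ _ _
      _ ≤ c ^ k • c • q := smul_le_smul_of_nonneg_left hq (pow_nonneg hc k)
      _ = c ^ (k + 1) • q := by rw [smul_smul, pow_succ]

theorem tendsto_sum_beta_mul {A : Fin d → H →L[ℂ] H} (hA : ∀ i j, Commute (A i) (A j))
    {q : H → ℝ} (hq0 : ∀ x, 0 ≤ q x) {c : ℝ} (hc0 : 0 ≤ c) (hc1 : c < 1)
    (hq : ∀ x, ∑ j, q (A j x) ≤ c * q x) (h : H) :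
    Tendsto (fun k => ∑ n ∈ piAntidiag univ k, beta d n * q (ApowCLM d A n h)) atTop (𝓝 0) := by
  have hrow : rowMap A q ≤ c • q := fun x => (rowMap_apply A q x).trans_le (hq x)
  refine squeeze_zero (fun k => sum_nonneg fun n _ => mul_nonneg (beta_nonneg d n) (hq0 _))
    (fun k => ?_) (by simpa using (tendsto_pow_atTop_nhds_zero_of_lt_one hc0 hc1).mul_const (q h))
  rw [← rowMap_pow_apply hA]
  exact rowMap_pow_le hc0 hrow k h

theorem defect_isometry_general {K : Type*} [SeminormedAddCommGroup K] {A : Fin d → H →L[ℂ] H}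
    (hA : ∀ i j, Commute (A i) (A j)) {D : H → K}
    (hD : ∀ x, ‖D x‖ ^ 2 = ‖x‖ ^ 2 - ∑ j, ‖A j x‖ ^ 2) {h : H} {L : ℝ}
    (hL : Tendsto (fun k => ∑ n ∈ piAntidiag univ k, beta d n * ‖ApowCLM d A n h‖ ^ 2)
      atTop (𝓝 L)) :
    HasSum (fun n : Idx d => beta d n * ‖D (ApowCLM d A n h)‖ ^ 2) (‖h‖ ^ 2 - L) := by
  set N : H → ℝ := fun x => ‖x‖ ^ 2
  have hdefect : (fun x => ‖D x‖ ^ 2) = N - rowMap A N := by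
    ext x
    rw [hD, Pi.sub_apply, rowMap_apply]
  have hterm_nonneg (n : Idx d) : 0 ≤ beta d n * ‖D (ApowCLM d A n h)‖ ^ 2 :=
    mul_nonneg (beta_nonneg d n) (sq_nonneg _)
  have hdegree (k : ℕ) : ∑ n ∈ piAntidiag univ k, beta d n * ‖D (ApowCLM d A n h)‖ ^ 2 =
      (rowMap A ^ k) N h - (rowMap A ^ (k + 1)) N h := by
    rw [← rowMap_pow_apply hA k (fun x => ‖D x‖ ^ 2), hdefect, map_sub, pow_succ]
    rfl
  refine hasSum_of_hasSum_sum_fiber hterm_nonneg (fun n => ∑ j, n j) (piAntidiag univ)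
    (fun k n => by simp) ?_
  rw [hasSum_iff_tendsto_nat_of_nonneg fun k => sum_nonneg fun n _ => hterm_nonneg n]
  simp only [hdegree, sum_range_sub']
  have hlim : Tendsto (fun k => (rowMap A ^ k) N h) atTop (𝓝 L) := by
    simpa only [rowMap_pow_apply hA] using hL
  exact hlim.const_sub _

end RowMap

/-- **Drury's isometry.** Let `A` be a commuting `d`-tuple of bounded
operators on a complex Hilbert space `H` with `∑_j ‖A_j h‖² ≤ r² ‖h‖²` for some
`0 < r < 1`, and let `D = (I - ∑_j A_j^* A_j)^{1/2}` be the defect operator (the positive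
square root).  Then `∑_{n ∈ ℕ^d} β(n) ‖D A^n h‖² = ‖h‖²` for every `h ∈ H`. -/
theorem defect_isometry (d : ℕ) {H : Type*} [NormedAddCommGroup H]
    [InnerProductSpace ℂ H] [CompleteSpace H] (A : Fin d → H →L[ℂ] H)
    (hcomm : ∀ i j, A i ∘L A j = A j ∘L A i)
    (r : ℝ) (hr0 : 0 < r) (hr1 : r < 1)
    (hrow : ∀ h : H, ∑ j, ‖A j h‖ ^ 2 ≤ r ^ 2 * ‖h‖ ^ 2)
    (D : H →L[ℂ] H) (hDpos : D.IsPositive)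
    (hDsq : D ∘L D = 1 - ∑ j, (ContinuousLinearMap.adjoint (A j)) ∘L A j)
    (h : H) :
    HasSum (fun n : Idx d => beta d n * ‖D (ApowCLM d A n h)‖ ^ 2) (‖h‖ ^ 2) := by
  have hD := norm_sq_apply_of_adjoint_comp_self_eq (A := A) (D := D)
    (by rwa [hDpos.isSelfAdjoint.adjoint_eq])
  have hlim := tendsto_sum_beta_mul hcomm (q := fun x => ‖x‖ ^ 2) (fun _ => sq_nonneg _)
    (sq_nonneg r) (pow_lt_one₀ hr0.le hr1 two_ne_zero) hrow h
  simpa only [sub_zero] using defect_isometry_general hcomm hD hlim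

end DruryArveson
end
end

section
/- Let X ⊆ ℕ^d be an arbitrary subset. The compressed backshift operators B^X_1,…,B^X_d on ℓ²(X,β) commute pairwise (B^X_i B^X_j = B^X_j B^X_i for all i,j) if and only if X satisfies the shape condition: for all i,j ∈ {1,…,d} and all n ∈ ℕ^d, if n ∈ X, n+e_i ∈ X and n+e_i+e_j ∈ X, then n+e_j ∈ X. -/
open scoped BigOperators ComplexConjugate

noncomputable section

namespace DruryArveson

/-!
Given `g` supported in `X`, the composition of the compressed shifts by `a` and `b` sends `g` to
`n ↦ g (n + a + b)` on the set of those `n` for which `n`, `n + a`, `n + a + b` all lie in `X`, and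
to `0` elsewhere. The other order gives the same formula with `n + b` in place of `n + a`. Hence the
two compositions agree as soon as the two sets do, and conversely a function which does not vanish
at `n + a + b` detects any `n` that lies in one of the sets but not in the other.
-/

section CompressedShift

open Function (support)

variable {M α : Type*}

section Add

variable [Add M] [Zero α] {X : Set M} {a b : M} {g : M → α}

/-- The shift `g ↦ g (· + a)` followed by restriction to `X`. For `M = ℕ^d` and `a = e_j` it is
the compressed backshift `BXop d X j`. -/
def compressedShift (X : Set M) (a : M) (g : M → α) : M → α :=
  X.indicator fun n => g (n + a)

/-- The starting points in `X` from which the path with successive steps `a` and `b` stays in `X`.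
The composition of the compressed shifts by `a` and `b` sees only these points. -/
def pathStarts (X : Set M) (a b : M) : Set M :=
  {n | n ∈ X ∧ n + a ∈ X ∧ n + a + b ∈ X}

theorem compressedShift_compressedShift (hg : support g ⊆ X) :
    compressedShift X a (compressedShift X b g) =
      (pathStarts X a b).indicator fun n => g (n + a + b) := by
  classical
  ext n
  have hzero : n + a + b ∉ X → g (n + a + b) = 0 := fun hn =>
    Function.notMem_support.1 fun hmem => hn (hg hmem)
  simp only [compressedShift, pathStarts, Set.indicator_apply, Set.mem_ofPred_eq]
  grind

theorem pathStarts_subset_of_compressedShift_comm {V : Set (M → α)}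
    (hsupp : ∀ g ∈ V, support g ⊆ X) (hne : ∀ m ∈ X, ∃ g ∈ V, g m ≠ 0)
    (hcomm : ∀ g ∈ V, compressedShift X a (compressedShift X b g) =
      compressedShift X b (compressedShift X a g)) :
    pathStarts X a b ⊆ pathStarts X b a := by
  intro n hn
  obtain ⟨g, hgV, hgn⟩ := hne (n + a + b) hn.2.2
  have heq : (pathStarts X a b).indicator (fun k => g (k + a + b)) n =
      (pathStarts X b a).indicator (fun k => g (k + b + a)) n := by
    simpa only [compressedShift_compressedShift (hsupp g hgV)] using congrFun (hcomm g hgV) n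
  rw [Set.indicator_of_mem hn] at heq
  exact Set.mem_of_indicator_ne_zero (heq ▸ hgn)

end Add

section AddCommSemigroup

variable {ι : Type*} [AddCommSemigroup M] [Zero α] {X : Set M} {a b : M} {g : M → α}

theorem forall_pathStarts_comm_iff_shape (X : Set M) (a : ι → M) :
    (∀ i j, pathStarts X (a i) (a j) = pathStarts X (a j) (a i)) ↔
      ∀ i j n, n ∈ X → n + a i ∈ X → n + a i + a j ∈ X → n + a j ∈ X := by
  constructor
  · intro h i j n hn hi hij
    have hmem : n ∈ pathStarts X (a j) (a i) := h i j ▸ ⟨hn, hi, hij⟩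
    exact hmem.2.1
  · intro h
    have hsub (i j : ι) : pathStarts X (a i) (a j) ⊆ pathStarts X (a j) (a i) :=
      fun n ⟨hn, hi, hij⟩ => ⟨hn, h i j n hn hi hij, add_right_comm n (a i) (a j) ▸ hij⟩
    exact fun i j => (hsub i j).antisymm (hsub j i)

theorem compressedShift_comm_of_pathStarts_eq (hX : pathStarts X a b = pathStarts X b a)
    (hg : support g ⊆ X) :
    compressedShift X a (compressedShift X b g) = compressedShift X b (compressedShift X a g) := by
  simp only [compressedShift_compressedShift hg, hX, add_right_comm _ a b]

theorem forall_compressedShift_comm_iff {V : Set (M → α)} (hsupp : ∀ g ∈ V, support g ⊆ X)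
    (hne : ∀ m ∈ X, ∃ g ∈ V, g m ≠ 0) :
    (∀ g ∈ V, compressedShift X a (compressedShift X b g) =
      compressedShift X b (compressedShift X a g)) ↔ pathStarts X a b = pathStarts X b a := by
  constructor
  · intro h
    exact (pathStarts_subset_of_compressedShift_comm hsupp hne h).antisymm
      (pathStarts_subset_of_compressedShift_comm hsupp hne fun g hg => (h g hg).symm)
  · exact fun hX g hg => compressedShift_comm_of_pathStarts_eq hX (hsupp g hg)

theorem backshift_commute_iff_shape_general (a : ι → M) {V : Set (M → α)}
    (hsupp : ∀ g ∈ V, support g ⊆ X) (hne : ∀ m ∈ X, ∃ g ∈ V, g m ≠ 0) :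
    (∀ i j, ∀ g ∈ V, compressedShift X (a i) (compressedShift X (a j) g) =
      compressedShift X (a j) (compressedShift X (a i) g)) ↔
    ∀ i j n, n ∈ X → n + a i ∈ X → n + a i + a j ∈ X → n + a j ∈ X := by
  simp only [forall_compressedShift_comm_iff hsupp hne, forall_pathStarts_comm_iff_shape]

end AddCommSemigroup

end CompressedShift

section WeightedSequenceSpace

variable {d : ℕ} {X : Set (Idx d)}

theorem MemL2.support_subset {g : Idx d → ℂ} (hg : MemL2 d X g) : Function.support g ⊆ X :=
  Function.support_subset_iff'.2 hg.1

theorem memL2_of_finite_support {g : Idx d → ℂ} (hX : Function.support g ⊆ X)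
    (hfin : (Function.support g).Finite) : MemL2 d X g := by
  have hsub : (Function.support fun n => ‖g n‖ ^ 2 * beta d n) ⊆ Function.support g :=
    Function.support_subset_iff'.2 fun n hn => by simp [Function.notMem_support.1 hn]
  exact ⟨Function.support_subset_iff'.1 hX, summable_of_hasFiniteSupport (hfin.subset hsub)⟩

theorem exists_memL2_apply_ne_zero {m : Idx d} (hm : m ∈ X) : ∃ g, MemL2 d X g ∧ g m ≠ 0 := by
  have hsupp : Function.support (Pi.single m 1 : Idx d → ℂ) ⊆ {m} := Pi.support_single_subset
  exact ⟨Pi.single m 1, memL2_of_finite_support (hsupp.trans (Set.singleton_subset_iff.2 hm))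
    ((Set.finite_singleton m).subset hsupp), by simp⟩

end WeightedSequenceSpace

/-- For an arbitrary `X ⊆ ℕ^d`, the compressed backshifts
`B^X_1,…,B^X_d` commute pairwise on `ℓ²(X,β)` if and only if `X` satisfies the shape
condition: `n ∈ X`, `n+e_i ∈ X`, `n+e_i+e_j ∈ X` imply `n+e_j ∈ X`. -/
theorem backshift_commute_iff_shape (d : ℕ) (X : Set (Idx d)) :
    (∀ i j : Fin d, ∀ g, MemL2 d X g →
        BXop d X i (BXop d X j g) = BXop d X j (BXop d X i g)) ↔
    (∀ i j : Fin d, ∀ n : Idx d,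
        n ∈ X → n + e d i ∈ X → n + e d i + e d j ∈ X → n + e d j ∈ X) := by
  exact backshift_commute_iff_shape_general (V := {g | MemL2 d X g}) (e d)
    (fun _ hg => hg.support_subset) (fun _ hm => exists_memL2_apply_ne_zero hm)

end DruryArveson
end
end
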